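/- Let (γ₁,c₁),…,(γ_k,c_k) be pairwise distinct pairs with γ_i > 0, let (γ'₁,c'₁),…,(γ'_{k'},c'_{k'}) be pairwise distinct pairs with γ'_j > 0, and let p₁,…,p_k > 0 and q₁,…,q_{k'} > 0 be positive weights. If Σ_{i=1}^k p_i · G(y; γ_i, c_i) = Σ_{j=1}^{k'} q_j · G(y; γ'_j, c'_j) for every y ∈ ℝ, then k = k' and there is a permutation π of {1,…,k} such that (p_i, γ_i, c_i) = (q_{π(i)}, γ'_{π(i)}, c'_{π(i)}) for every i; that is, finite mixtures of logistic distributions are identifiable. -/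

import Mathlib

/-!
The logistic functions with positive rate are linearly independent, because they extend to
meromorphic functions that can be told apart by their poles: `G(·; γ, c)` has the pole
`c + πi/γ`, and this is not a pole of `G(·; γ', c')` for any other `(γ', c')` with
`0 < γ' ≤ γ`. Hence in a vanishing linear combination the term with the largest rate has
coefficient zero.
-/

/-- The logistic transition function (the cdf of the logistic distribution with location
`c` and scale `1/γ`): `G(y; γ, c) = 1/(1+e^{-γ(y-c)})`. -/
noncomputable def logisticG (γ c y : ℝ) : ℝ := 1 / (1 + Real.exp (-γ * (y - c)))

open Filter Topology

theorem exists_equiv_of_mapDomain_eq {ι κ α M : Type*} [AddCommMonoid M] {p : ι →₀ M} {q : κ →₀ M}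
    {θ : ι → α} {θ' : κ → α} (hθ : θ.Injective) (hθ' : θ'.Injective)
    (hp : ∀ i, p i ≠ 0) (hq : ∀ j, q j ≠ 0) (h : p.mapDomain θ = q.mapDomain θ') :
    ∃ e : ι ≃ κ, ∀ i, p i = q (e i) ∧ θ i = θ' (e i) := by
  classical
  have hrange : Set.range θ = Set.range θ' := by
    have hsupp := congrArg (fun f : α →₀ M => (f.support : Set α)) h
    have hp' : (p.support : Set ι) = Set.univ := by ext i; simp [hp i]
    have hq' : (q.support : Set κ) = Set.univ := by ext j; simp [hq j]
    simpa only [Finsupp.mapDomain_support_of_injective hθ,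
      Finsupp.mapDomain_support_of_injective hθ', Finset.coe_image, hp', hq',
      Set.image_univ] using hsupp
  let e : ι ≃ κ := (Equiv.ofInjective θ hθ).trans
    ((Equiv.setCongr hrange).trans (Equiv.ofInjective θ' hθ').symm)
  have he (i : ι) : θ i = θ' (e i) :=
    (Equiv.apply_ofInjective_symm hθ' (Equiv.setCongr hrange (Equiv.ofInjective θ hθ i))).symm
  refine ⟨e, fun i => ⟨?_, he i⟩⟩
  rw [← Finsupp.mapDomain_apply hθ p i, h, he i, Finsupp.mapDomain_apply hθ']

theorem exists_equiv_of_sum_smul_eq {R M ι κ α : Type*} [Semiring R] [AddCommMonoid M]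
    [Module R M] [Fintype ι] [Fintype κ] {v : α → M} {s : Set α} (hv : LinearIndepOn R v s)
    {θ : ι → α} {θ' : κ → α} (hθ : θ.Injective) (hθ' : θ'.Injective)
    (hθs : ∀ i, θ i ∈ s) (hθs' : ∀ j, θ' j ∈ s) {p : ι → R} {q : κ → R}
    (hp : ∀ i, p i ≠ 0) (hq : ∀ j, q j ≠ 0)
    (h : ∑ i, p i • v (θ i) = ∑ j, q j • v (θ' j)) :
    ∃ e : ι ≃ κ, ∀ i, p i = q (e i) ∧ θ i = θ' (e i) := by
  classical
  let P : ι →₀ R := Finsupp.equivFunOnFinite.symm p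
  let Q : κ →₀ R := Finsupp.equivFunOnFinite.symm q
  have hP : P.mapDomain θ ∈ Finsupp.supported R R s := fun a ha => by
    obtain ⟨i, -, rfl⟩ := Finset.mem_image.1 (Finsupp.mapDomain_support ha)
    exact hθs i
  have hQ : Q.mapDomain θ' ∈ Finsupp.supported R R s := fun a ha => by
    obtain ⟨j, -, rfl⟩ := Finset.mem_image.1 (Finsupp.mapDomain_support ha)
    exact hθs' j
  refine exists_equiv_of_mapDomain_eq (p := P) (q := Q) hθ hθ' hp hq
    (linearIndepOn_iffₛ.1 hv _ hP _ hQ ?_)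
  rw [Finsupp.linearCombination_mapDomain, Finsupp.linearCombination_mapDomain]
  simpa [P, Q, Finsupp.linearCombination_apply, Finsupp.sum_fintype] using h

theorem sum_mul_prod_erase_eq_prod_mul_sum_div {ι K : Type*} [DecidableEq ι] [Semifield K]
    {s : Finset ι} (a : ι → K) {d : ι → K} (hd : ∀ i ∈ s, d i ≠ 0) :
    ∑ i ∈ s, a i * ∏ j ∈ s.erase i, d j = (∏ i ∈ s, d i) * ∑ i ∈ s, a i / d i := by
  rw [Finset.mul_sum]
  refine Finset.sum_congr rfl fun i hi => ?_
  rw [← Finset.mul_prod_erase s d hi]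
  field_simp [hd i hi]

/-- Clearing denominators makes the identity `∑ i ∈ s, a i / D i = 0` analytic, so it can be
continued to `z`, where only the term of `m` survives. -/
theorem eq_zero_of_frequently_sum_div_eq_zero {ι 𝕜 : Type*} [NontriviallyNormedField 𝕜]
    {U : Set 𝕜} (hU : IsPreconnected U) {s : Finset ι} {D : ι → 𝕜 → 𝕜}
    (hD : ∀ i ∈ s, AnalyticOnNhd 𝕜 (D i) U) {a : ι → 𝕜} {x z : 𝕜} (hx : x ∈ U) (hz : z ∈ U)
    (hDx : ∀ i ∈ s, D i x ≠ 0) (h : ∃ᶠ y in 𝓝[≠] x, ∑ i ∈ s, a i / D i y = 0)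
    {m : ι} (hm : m ∈ s) (hDz : ∀ i ∈ s, D i z = 0 ↔ i = m) :
    a m = 0 := by
  classical
  let N : 𝕜 → 𝕜 := fun y => ∑ i ∈ s, a i * ∏ j ∈ s.erase i, D j y
  have hN : AnalyticOnNhd 𝕜 N U :=
    Finset.analyticOnNhd_fun_sum _ fun i _ => analyticOnNhd_const.mul <|
      Finset.analyticOnNhd_fun_prod _ fun j hj => hD j (Finset.mem_of_mem_erase hj)
  have hD_ne : ∀ᶠ y in 𝓝[≠] x, ∀ i ∈ s, D i y ≠ 0 :=
    nhdsWithin_le_nhds <| (Finset.eventually_all s).2 fun i hi =>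
      (hD i hi x hx).continuousAt.eventually_ne (hDx i hi)
  have hN_freq : ∃ᶠ y in 𝓝[≠] x, N y = 0 :=
    (h.and_eventually hD_ne).mono fun y ⟨hy, hDy⟩ => by
      simp only [N, sum_mul_prod_erase_eq_prod_mul_sum_div a hDy, hy, mul_zero]
  have hNz : N z = a m * ∏ j ∈ s.erase m, D j z :=
    Finset.sum_eq_single_of_mem m hm fun i _ him => by
      rw [Finset.prod_eq_zero (Finset.mem_erase.2 ⟨him.symm, hm⟩) ((hDz m hm).2 rfl), mul_zero]
  have hprod : ∏ j ∈ s.erase m, D j z ≠ 0 := Finset.prod_ne_zero_iff.2 fun j hj =>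
    (hDz j (Finset.mem_of_mem_erase hj)).not.2 (Finset.ne_of_mem_erase hj)
  have hNz_zero : N z = 0 := hN.eqOn_zero_of_preconnected_of_frequently_eq_zero hU hx hN_freq hz
  exact (mul_eq_zero.1 (hNz.symm.trans hNz_zero)).resolve_right hprod

/-- The denominator `1 + e^{-γ(z-c)}` of the meromorphic extension of `logisticG γ c` to the
complex plane; the poles of that extension are its zeros. -/
noncomputable def logisticDenom (γ c : ℝ) (z : ℂ) : ℂ := 1 + Complex.exp (-γ * (z - c))

/-- For `γ > 0`, the pole `c + πi/γ` of `logisticG γ c` that lies closest to the real axis in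
the upper half plane. -/
noncomputable def logisticPole (γ c : ℝ) : ℂ := ⟨c, Real.pi / γ⟩

theorem differentiable_logisticDenom (γ c : ℝ) : Differentiable ℂ (logisticDenom γ c) := by
  unfold logisticDenom
  fun_prop

theorem logisticDenom_ofReal (γ c y : ℝ) :
    logisticDenom γ c y = ((1 + Real.exp (-γ * (y - c)) : ℝ) : ℂ) := by
  simp [logisticDenom]

theorem logisticDenom_ofReal_ne_zero (γ c y : ℝ) : logisticDenom γ c y ≠ 0 := by
  rw [logisticDenom_ofReal, Complex.ofReal_ne_zero]
  positivity

theorem ofReal_logisticG (γ c y : ℝ) : (logisticG γ c y : ℂ) = 1 / logisticDenom γ c y := by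
  rw [logisticDenom_ofReal, logisticG, Complex.ofReal_div, Complex.ofReal_one]

theorem logisticDenom_eq_zero_iff {γ c : ℝ} {z : ℂ} :
    logisticDenom γ c z = 0 ↔
      γ * (z.re - c) = 0 ∧ ∃ n : ℤ, γ * z.im = (2 * n + 1) * Real.pi := by
  have hexp : logisticDenom γ c z = 0 ↔
      Complex.exp (γ * (z - c)) = Complex.exp (Real.pi * Complex.I) := by
    rw [logisticDenom, neg_mul, Complex.exp_neg, Complex.exp_pi_mul_I, add_comm,
      add_eq_zero_iff_eq_neg, inv_eq_iff_eq_inv, inv_neg_one]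
  have him (n : ℤ) : γ * z.im = Real.pi + n * (2 * Real.pi) ↔ γ * z.im = (2 * n + 1) * Real.pi := by
    ring_nf
  rw [hexp, Complex.exp_eq_exp_iff_exists_int]
  simp [Complex.ext_iff, ← him]

theorem logisticDenom_logisticPole_eq_zero_iff {γ γ' c c' : ℝ} (hγ' : 0 < γ') (hle : γ' ≤ γ) :
    logisticDenom γ' c' (logisticPole γ c) = 0 ↔ γ' = γ ∧ c' = c := by
  have hγ : 0 < γ := hγ'.trans_le hle
  have him (n : ℤ) : γ' * (Real.pi / γ) = (2 * n + 1) * Real.pi ↔ γ' = (2 * n + 1) * γ := by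
    field_simp
  simp only [logisticDenom_eq_zero_iff, logisticPole, him, mul_eq_zero, hγ'.ne', false_or,
    sub_eq_zero]
  constructor
  · rintro ⟨hc, n, hn⟩
    have hpos : 0 < 2 * n + 1 := by
      have : (0 : ℝ) < 2 * n + 1 := pos_of_mul_pos_left (hn ▸ hγ') hγ.le
      exact_mod_cast this
    have hle_one : 2 * n + 1 ≤ 1 := by
      have : (2 * n + 1 : ℝ) ≤ 1 := le_of_mul_le_mul_right (by rwa [one_mul, ← hn]) hγ
      exact_mod_cast this
    obtain rfl : n = 0 := by lia
    exact ⟨by simpa using hn, hc.symm⟩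
  · rintro ⟨rfl, rfl⟩
    exact ⟨rfl, 0, by simp⟩

theorem linearIndepOn_logisticG {S : Set ℝ} {x : ℝ} (hx : AccPt x (𝓟 S)) :
    LinearIndepOn ℝ (fun θ : ℝ × ℝ => S.domRestrict (logisticG θ.1 θ.2)) {θ | 0 < θ.1} := by
  refine linearIndepOn_iff.2 fun l hl hsum => ?_
  by_contra hne
  obtain ⟨m, hm, hmax⟩ := l.support.exists_max_image Prod.fst (Finsupp.support_nonempty_iff.2 hne)
  have hzero : ∀ y ∈ S, ∑ θ ∈ l.support, (l θ : ℂ) / logisticDenom θ.1 θ.2 y = 0 := fun y hy => by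
    have hy_sum : ∑ θ ∈ l.support, l θ * logisticG θ.1 θ.2 y = 0 := by
      simpa [Finsupp.linearCombination_apply, Finsupp.sum] using congrFun hsum ⟨y, hy⟩
    simpa [ofReal_logisticG, ← div_eq_mul_inv] using congrArg Complex.ofReal hy_sum
  have hfreq : ∃ᶠ z in 𝓝[≠] (x : ℂ),
      ∑ θ ∈ l.support, (l θ : ℂ) / logisticDenom θ.1 θ.2 z = 0 := by
    have htendsto : Tendsto Complex.ofReal (𝓝[≠] x) (𝓝[≠] (x : ℂ)) :=
      Complex.continuous_ofReal.continuousWithinAt.tendsto_nhdsWithin fun y hy =>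
        Complex.ofReal_injective.ne hy
    exact htendsto.frequently ((accPt_iff_frequently_nhdsNE.1 hx).mono hzero)
  have hpole : ∀ θ ∈ l.support,
      logisticDenom θ.1 θ.2 (logisticPole m.1 m.2) = 0 ↔ θ = m := fun θ hθ => by
    rw [logisticDenom_logisticPole_eq_zero_iff (hl hθ) (hmax θ hθ), Prod.ext_iff]
  have hlm : (l m : ℂ) = 0 :=
    eq_zero_of_frequently_sum_div_eq_zero (a := fun θ => (l θ : ℂ)) isPreconnected_univ
      (fun θ _ z _ => (differentiable_logisticDenom θ.1 θ.2).analyticAt z)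
      (Set.mem_univ _) (Set.mem_univ _)
      (fun θ _ => logisticDenom_ofReal_ne_zero θ.1 θ.2 x) hfreq hm hpole
  exact Finsupp.mem_support_iff.1 hm (Complex.ofReal_eq_zero.1 hlm)

theorem logistic_mixture_identifiable_general {ι κ : Type*} [Fintype ι] [Fintype κ]
    {γ c p : ι → ℝ} {γ' c' q : κ → ℝ} (hγ : ∀ i, 0 < γ i) (hγ' : ∀ j, 0 < γ' j)
    (hp : ∀ i, p i ≠ 0) (hq : ∀ j, q j ≠ 0)
    (hinj : Function.Injective fun i => (γ i, c i))
    (hinj' : Function.Injective fun j => (γ' j, c' j))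
    {S : Set ℝ} {x : ℝ} (hx : AccPt x (𝓟 S))
    (h : ∀ y ∈ S, ∑ i, p i * logisticG (γ i) (c i) y = ∑ j, q j * logisticG (γ' j) (c' j) y) :
    ∃ e : ι ≃ κ, ∀ i, p i = q (e i) ∧ γ i = γ' (e i) ∧ c i = c' (e i) := by
  have hsum : ∑ i, p i • S.domRestrict (logisticG (γ i) (c i)) =
      ∑ j, q j • S.domRestrict (logisticG (γ' j) (c' j)) := by
    ext y
    simpa using h y y.2
  simpa only [Prod.mk.injEq] using
    exists_equiv_of_sum_smul_eq (linearIndepOn_logisticG hx) hinj hinj' hγ hγ' hp hq hsum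

/-- Identifiability of finite mixtures of logistic distributions: if two finite mixtures
with positive weights and pairwise distinct component parameters coincide as functions on
`ℝ`, then they have the same number of components and the components (weights and
parameters) match under a permutation. -/
theorem logistic_mixture_identifiable
    (k k' : ℕ) (γ c : Fin k → ℝ) (γ' c' : Fin k' → ℝ)
    (pw : Fin k → ℝ) (qw : Fin k' → ℝ)
    (hγ : ∀ i, 0 < γ i) (hγ' : ∀ j, 0 < γ' j)
    (hp : ∀ i, 0 < pw i) (hq : ∀ j, 0 < qw j)
    (hdist : ∀ i j : Fin k, i ≠ j → (γ i, c i) ≠ (γ j, c j))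
    (hdist' : ∀ i j : Fin k', i ≠ j → (γ' i, c' i) ≠ (γ' j, c' j))
    (h : ∀ y : ℝ, ∑ i, pw i * logisticG (γ i) (c i) y =
      ∑ j, qw j * logisticG (γ' j) (c' j) y) :
    k = k' ∧ ∃ e : Fin k ≃ Fin k',
      ∀ i, pw i = qw (e i) ∧ γ i = γ' (e i) ∧ c i = c' (e i) := by
  obtain ⟨e, he⟩ := logistic_mixture_identifiable_general hγ hγ' (fun i => (hp i).ne')
    (fun j => (hq j).ne') (Function.injective_iff_pairwise_ne.2 fun i j => hdist i j)
    (Function.injective_iff_pairwise_ne.2 fun i j => hdist' i j)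
    (PerfectSpace.univ_preperfect 0 (Set.mem_univ _)) fun y _ => h y
  exact ⟨Fin.equiv_iff_eq.1 ⟨e⟩, e, he⟩
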